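/- arXiv:2106.11862 — 2 statements merged into one kernel-verified Lean document; each statement's English description precedes it below -/
import Mathlib

section
/- Let μ : ℝ → ℝ be a nonnegative, even (μ(x) = μ(−x)), integrable function with ∫_ℝ μ(x) dx = 1, such that μ is continuous at 0 and x ↦ x²·μ(x) is integrable. For η > 0 define the suboptimality Sub(η) = ∫_ℝ (x−1)²·μ(x)/(1+e^{−4ηx}) dx + ∫_ℝ (x+1)²·μ(x)/(1+e^{4ηx}) dx − ∫_ℝ (|x|−1)²·μ(x) dx. Then lim_{η→∞} η²·Sub(η) = π²·μ(0)/24. -/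
open MeasureTheory Filter

lemma HasSum.congr_fun_eq {f g : ℕ → ℝ} {a : ℝ} (h : HasSum f a) (e : ∀ n, g n = f n) :
    HasSum g a := by
  rwa [show g = f from funext e]

lemma alt_zeta_two :
    HasSum (fun n : ℕ => (-1 : ℝ) ^ n * (1 / ((n : ℝ) + 1) ^ 2)) (Real.pi ^ 2 / 12) := by
  have hz : HasSum (fun n : ℕ => 1 / ((n : ℝ) + 1) ^ 2) (Real.pi ^ 2 / 6) := by
    have h := (hasSum_nat_add_iff' (f := fun n : ℕ => (1 : ℝ) / (n : ℝ) ^ 2) 1).mpr hasSum_zeta_two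
    simpa using h
  have hodd : HasSum (fun k : ℕ => 1 / (((2 * k + 1 : ℕ) : ℝ) + 1) ^ 2)
      (Real.pi ^ 2 / 6 / 4) := by
    have h := hz.div_const 4
    refine h.congr_fun_eq fun k => ?_
    push_cast
    field_simp
    ring
  have hes : Summable (fun k : ℕ => 1 / (((2 * k : ℕ) : ℝ) + 1) ^ 2) :=
    hz.summable.comp_injective (i := fun k : ℕ => 2 * k) (fun a b h => by simpa using h)
  obtain ⟨m, hm⟩ := hes
  have h1 := HasSum.even_add_odd (f := fun n : ℕ => 1 / ((n : ℝ) + 1) ^ 2) hm hodd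
  have h2 := h1.unique hz
  have h3 := HasSum.even_add_odd
    (f := fun n : ℕ => (-1 : ℝ) ^ n * (1 / ((n : ℝ) + 1) ^ 2)) (m := m)
    (m' := -(Real.pi ^ 2 / 6 / 4)) (by simpa [pow_mul] using hm)
    (by simpa [pow_mul, pow_succ] using hodd.neg)
  convert h3 using 1
  linarith

lemma integral_base {r : ℝ} (hr : 0 < r) :
    ∫ t in Set.Ioi (0 : ℝ), t * Real.exp (-(r * t)) = 1 / r ^ 2 := by
  have h := Real.integral_rpow_mul_exp_neg_mul_Ioi (a := 2) (by norm_num) hr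
  have e : (2 : ℝ) - 1 = 1 := by norm_num
  simp only [e, Real.rpow_one, Real.Gamma_two, mul_one, Real.rpow_two] at h
  rw [h, div_pow, one_pow]

lemma integrable_base {r : ℝ} (hr : 0 < r) :
    IntegrableOn (fun t : ℝ => t * Real.exp (-(r * t))) (Set.Ioi 0) :=
  .of_integral_ne_zero (by rw [integral_base hr]; positivity)

lemma integral_fermi :
    ∫ t in Set.Ioi (0 : ℝ), 4 * t / (1 + Real.exp (4 * t)) = Real.pi ^ 2 / 48 := by
  let F : ℕ → ℝ → ℝ := fun n t =>
    (4 * (-1 : ℝ) ^ n) * (t * Real.exp (-((4 * ((n : ℝ) + 1)) * t)))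
  have hFi : ∀ n, Integrable (F n) (volume.restrict (Set.Ioi 0)) := fun n =>
    (integrable_base (r := 4 * ((n : ℝ) + 1)) (by positivity)).const_mul _
  have hFn : ∀ n, ∫ t in Set.Ioi (0 : ℝ), ‖F n t‖ = 1 / 4 * (1 / ((n : ℝ) + 1) ^ 2) := by
    intro n
    have : ∀ t ∈ Set.Ioi (0 : ℝ), ‖F n t‖ = 4 * (t * Real.exp (-((4 * ((n : ℝ) + 1)) * t))) := by
      intro t ht
      have ht' : (0 : ℝ) < t := ht
      simp [F, abs_of_pos ht']
    rw [setIntegral_congr_fun measurableSet_Ioi this, integral_const_mul,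
      integral_base (by positivity)]
    field_simp
    try norm_num
  have hs : Summable fun n => ∫ t in Set.Ioi (0 : ℝ), ‖F n t‖ := by
    simp_rw [hFn]
    have h := (hasSum_nat_add_iff' (f := fun n : ℕ => (1 : ℝ) / (n : ℝ) ^ 2) 1).mpr hasSum_zeta_two
    exact (by simpa using h.summable :
      Summable (fun n : ℕ => 1 / ((n : ℝ) + 1) ^ 2)).mul_left _
  have key := hasSum_integral_of_summable_integral_norm hFi hs
  have hL : HasSum (fun n => ∫ t in Set.Ioi (0 : ℝ), F n t) (Real.pi ^ 2 / 48) := by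
    have h := alt_zeta_two.mul_left (1 / 4)
    rw [show Real.pi ^ 2 / 48 = 1 / 4 * (Real.pi ^ 2 / 12) by ring]
    refine h.congr_fun_eq fun n => ?_
    simp only [F]
    rw [integral_const_mul, integral_base (by positivity)]
    field_simp
    try norm_num
  rw [← key.unique hL]
  refine setIntegral_congr_fun measurableSet_Ioi fun t ht => ?_
  have ht' : (0 : ℝ) < t := ht
  have hlt : Real.exp (-(4 * t)) < 1 := by rw [← Real.exp_zero]; exact Real.exp_lt_exp.mpr (by linarith)
  have hg := (hasSum_geometric_of_abs_lt_one (r := -Real.exp (-(4 * t)))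
    (by rw [abs_neg, abs_of_pos (Real.exp_pos _)]; exact hlt)).mul_left
      (4 * t * Real.exp (-(4 * t)))
  have hF : HasSum (fun n => F n t) (4 * t * Real.exp (-(4 * t)) *
      (1 - -Real.exp (-(4 * t)))⁻¹) := by
    refine hg.congr_fun_eq fun n => ?_
    have : Real.exp (-((4 * ((n : ℝ) + 1)) * t)) =
        Real.exp (-(4 * t)) * Real.exp (-(4 * t)) ^ n := by
      rw [← Real.exp_nat_mul, ← Real.exp_add]; congr 1; ring
    simp only [F]
    rw [this, neg_pow (Real.exp _)]
    ring
  rw [hF.tsum_eq, Real.exp_neg, sub_neg_eq_add]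
  have := Real.exp_pos (4 * t)
  field_simp
  ring

lemma pointwise_cost (η x : ℝ) :
    (x - 1) ^ 2 / (1 + Real.exp (-(4 * η * x))) + (x + 1) ^ 2 / (1 + Real.exp (4 * η * x))
      - (|x| - 1) ^ 2 = 4 * |x| / (1 + Real.exp (4 * (η * |x|))) := by
  rcases le_total 0 x with h | h
  · rw [abs_of_nonneg h, Real.exp_neg, ← mul_assoc]
    have := Real.exp_pos (4 * η * x)
    field_simp
    ring
  · rw [abs_of_nonpos h, show 4 * (η * -x) = -(4 * η * x) by ring, Real.exp_neg]
    have := Real.exp_pos (4 * η * x)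
    field_simp
    ring

theorem suboptimality_quadratic_limit (μ : ℝ → ℝ)
    (hnn : ∀ x, 0 ≤ μ x)
    (heven : ∀ x, μ x = μ (-x))
    (hint : Integrable μ)
    (hprob : ∫ x, μ x = 1)
    (hcont : ContinuousAt μ 0)
    (hx2 : Integrable (fun x => x ^ 2 * μ x)) :
    Tendsto (fun η : ℝ => η ^ 2 *
        ((∫ x, (x - 1) ^ 2 * μ x / (1 + Real.exp (-(4 * η * x)))) +
          (∫ x, (x + 1) ^ 2 * μ x / (1 + Real.exp (4 * η * x))) -
          ∫ x, (|x| - 1) ^ 2 * μ x))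
      atTop (nhds (Real.pi ^ 2 * μ 0 / 24)) := by
  have hpi := Real.pi_pos
  let φ : ℝ → ℝ := fun x => 24 / Real.pi ^ 2 * (4 * |x| / (1 + Real.exp (4 * |x|)))
  have hφ0 : ∀ x, 0 ≤ φ x := fun x => by positivity
  have hφ1 : ∫ x, φ x = 1 := by
    simp only [φ]
    rw [integral_const_mul,
      integral_comp_abs (f := fun t => 4 * t / (1 + Real.exp (4 * t))), integral_fermi]
    field_simp
    norm_num
  have hφ2 : Tendsto (fun x : ℝ => ‖x‖ ^ Module.finrank ℝ ℝ * φ x)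
      (Bornology.cobounded ℝ) (nhds 0) := by
    have h := ((Real.tendsto_pow_mul_exp_neg_atTop_nhds_zero 2).comp
      (tendsto_norm_cobounded_atTop (E := ℝ))).const_mul (24 / Real.pi ^ 2 * 4)
    rw [mul_zero] at h
    refine squeeze_zero (fun x => mul_nonneg (by positivity) (hφ0 x)) (fun x => ?_) h
    simp only [φ, Module.finrank_self, pow_one, Real.norm_eq_abs, Function.comp]
    have h1 : Real.exp |x| ≤ 1 + Real.exp (4 * |x|) := by
      have : Real.exp |x| ≤ Real.exp (4 * |x|) :=
        Real.exp_le_exp.mpr (by linarith [abs_nonneg x])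
      linarith
    calc |x| * (24 / Real.pi ^ 2 * (4 * |x| / (1 + Real.exp (4 * |x|))))
        ≤ |x| * (24 / Real.pi ^ 2 * (4 * |x| / Real.exp |x|)) := by gcongr
      _ = _ := by rw [Real.exp_neg]; ring
  have main := (tendsto_integral_comp_smul_smul_of_integrable (μ := volume)
    hφ0 hφ1 hφ2 hint hcont).const_mul (Real.pi ^ 2 / 24)
  rw [show Real.pi ^ 2 * μ 0 / 24 = Real.pi ^ 2 / 24 * μ 0 by ring]
  refine main.congr' ?_
  filter_upwards [eventually_ge_atTop 0] with η hη
  have hm := hint.aestronglyMeasurable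
  have hdom : Integrable (fun x => 2 * (x ^ 2 * μ x) + 2 * μ x) :=
    (hx2.const_mul 2).add (hint.const_mul 2)
  have i1 : Integrable (fun x => (x - 1) ^ 2 * μ x / (1 + Real.exp (-(4 * η * x)))) := by
    refine hdom.mono' ?_ (Eventually.of_forall fun x => ?_)
    · refine AEStronglyMeasurable.div₀ ?_ ?_ <;> fun_prop
    · have := Real.exp_pos (-(4 * η * x))
      have h0 := mul_nonneg (sq_nonneg (x - 1)) (hnn x)
      rw [Real.norm_of_nonneg (by positivity)]
      refine (div_le_self h0 (by linarith)).trans ?_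
      nlinarith [mul_nonneg (sq_nonneg (x + 1)) (hnn x)]
  have i2 : Integrable (fun x => (x + 1) ^ 2 * μ x / (1 + Real.exp (4 * η * x))) := by
    refine hdom.mono' ?_ (Eventually.of_forall fun x => ?_)
    · refine AEStronglyMeasurable.div₀ ?_ ?_ <;> fun_prop
    · have := Real.exp_pos (4 * η * x)
      have h0 := mul_nonneg (sq_nonneg (x + 1)) (hnn x)
      rw [Real.norm_of_nonneg (by positivity)]
      refine (div_le_self h0 (by linarith)).trans ?_
      nlinarith [mul_nonneg (sq_nonneg (x - 1)) (hnn x)]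
  have i3 : Integrable (fun x => (|x| - 1) ^ 2 * μ x) := by
    refine hdom.mono' ?_ (Eventually.of_forall fun x => ?_)
    · have : Continuous fun x : ℝ => (|x| - 1) ^ 2 := by fun_prop
      exact this.aestronglyMeasurable.mul hm
    · have h0 := mul_nonneg (sq_nonneg (|x| - 1)) (hnn x)
      rw [Real.norm_of_nonneg h0]
      nlinarith [mul_nonneg (sq_nonneg (|x| + 1)) (hnn x), sq_abs x]
  rw [← integral_add i1 i2, ← integral_sub (by exact i1.add i2) i3, ← integral_const_mul,
    ← integral_const_mul]
  refine integral_congr_ae (Eventually.of_forall fun x => ?_)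
  have hp := pointwise_cost η x
  have e : (x - 1) ^ 2 * μ x / (1 + Real.exp (-(4 * η * x))) +
      (x + 1) ^ 2 * μ x / (1 + Real.exp (4 * η * x)) - (|x| - 1) ^ 2 * μ x =
      4 * |x| / (1 + Real.exp (4 * (η * |x|))) * μ x := by
    rw [← hp]; ring
  simp only [φ, Pi.add_apply, Module.finrank_self, pow_one, smul_eq_mul, abs_mul,
    abs_of_nonneg hη]
  rw [e]
  field_simp
end

section
/- Let μ be a probability measure on ℝ with an even density μ(·) (with respect to Lebesgue measure) and finite second moment, let ν = (1/2)δ_{−1} + (1/2)δ_{+1}, and fix η > 0. Define the probability measure π_η on ℝ × ℝ supported on ℝ × {−1, 1} by π_η(A × {y}) = ∫_A μ(x)·e^{−η(x−y)²}/(e^{−η(x−1)²}+e^{−η(x+1)²}) dx for y ∈ {−1, 1} and Borel A ⊆ ℝ. Then π_η is a coupling of μ and ν (its first marginal is μ and its second marginal is ν), and for every coupling π of μ and ν, ∫ (x−y)² dπ_η + (1/η)·KL(π_η ‖ μ ⊗ ν) ≤ ∫ (x−y)² dπ + (1/η)·KL(π ‖ μ ⊗ ν), where KL denotes the Kullback–Leibler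 divergence and μ ⊗ ν is the product measure. -/
open MeasureTheory ENNReal Classical

/-- Kullback–Leibler divergence: `∫ log (dπ/dρ) dπ` when `π ≪ ρ` (and the
log-likelihood ratio is integrable, which for probability measures is the
condition for finiteness), and `+∞` otherwise. -/

noncomputable def KLdiv (π ρ : Measure (ℝ × ℝ)) : ℝ≥0∞ :=
  if π ≪ ρ ∧ Integrable (llr π ρ) π then ENNReal.ofReal (∫ z, llr π ρ z ∂π)
  else ⊤

/-- The discrete measure `ν = (1/2) δ_{-1} + (1/2) δ_{+1}`. -/
noncomputable def nuHalf : Measure ℝ :=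
  (1 / 2 : ℝ≥0∞) • Measure.dirac (-1) + (1 / 2 : ℝ≥0∞) • Measure.dirac 1

/-- The entropically regularized coupling `π_η` in the symmetric one-dimensional
semi-discrete case: supported on `ℝ × {−1, 1}`, with
`π_η(A × {y}) = ∫_A μ(x) e^{−η(x−y)²}/(e^{−η(x−1)²}+e^{−η(x+1)²}) dx`. -/
noncomputable def piEta (μ : ℝ → ℝ) (η : ℝ) : Measure (ℝ × ℝ) :=
  Measure.map (fun x => (x, (1 : ℝ)))
    (volume.withDensity fun x => ENNReal.ofReal
      (μ x * Real.exp (-(η * (x - 1) ^ 2)) /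
        (Real.exp (-(η * (x - 1) ^ 2)) + Real.exp (-(η * (x + 1) ^ 2))))) +
  Measure.map (fun x => (x, (-1 : ℝ)))
    (volume.withDensity fun x => ENNReal.ofReal
      (μ x * Real.exp (-(η * (x + 1) ^ 2)) /
        (Real.exp (-(η * (x - 1) ^ 2)) + Real.exp (-(η * (x + 1) ^ 2)))))


/-- The normalizing factor. -/
noncomputable def zEta (η x : ℝ) : ℝ :=
  Real.exp (-(η * (x - 1) ^ 2)) + Real.exp (-(η * (x + 1) ^ 2))

/-- The log-density of `piEta` with respect to the product measure. -/
noncomputable def potEta (η : ℝ) (z : ℝ × ℝ) : ℝ :=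
  Real.log 2 - η * (z.1 - z.2) ^ 2 - Real.log (zEta η z.1)

lemma zEta_pos (η x : ℝ) : 0 < zEta η x := by unfold zEta; positivity

lemma zEta_meas (η : ℝ) : Measurable (zEta η) := by unfold zEta; fun_prop

lemma potEta_meas (η : ℝ) : Measurable (potEta η) := by
  have := zEta_meas η
  unfold potEta; fun_prop

lemma exp_potEta (η x y : ℝ) :
    Real.exp (potEta η (x, y)) = 2 * Real.exp (-(η * (x - y) ^ 2)) / zEta η x := by
  unfold potEta
  rw [Real.exp_sub, Real.exp_log (zEta_pos η x), sub_eq_add_neg, Real.exp_add,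
    Real.exp_log (by norm_num)]

lemma lintegral_piEta (μ : ℝ → ℝ) (hmeas : Measurable μ) (η : ℝ) (g : ℝ × ℝ → ℝ≥0∞)
    (hg : Measurable g) :
    ∫⁻ z, g z ∂(piEta μ η) =
      (∫⁻ x, ENNReal.ofReal (μ x * Real.exp (-(η * (x - 1) ^ 2)) / zEta η x) * g (x, 1)) +
      ∫⁻ x, ENNReal.ofReal (μ x * Real.exp (-(η * (x + 1) ^ 2)) / zEta η x) * g (x, -1) := by
  unfold piEta
  rw [lintegral_add_measure, lintegral_map hg (by fun_prop), lintegral_map hg (by fun_prop),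
    lintegral_withDensity_eq_lintegral_mul _ (by fun_prop) (by fun_prop),
    lintegral_withDensity_eq_lintegral_mul _ (by fun_prop) (by fun_prop)]
  rfl

lemma lintegral_rho (M : Measure ℝ) [SFinite M] (g : ℝ × ℝ → ℝ≥0∞) (hg : Measurable g) :
    ∫⁻ z, g z ∂(M.prod nuHalf) =
      2⁻¹ * (∫⁻ x, g (x, 1) ∂M) + 2⁻¹ * ∫⁻ x, g (x, -1) ∂M := by
  unfold nuHalf
  rw [Measure.prod_add, Measure.prod_smul_right, Measure.prod_smul_right, Measure.prod_dirac,
    Measure.prod_dirac, lintegral_add_measure, lintegral_smul_measure, lintegral_smul_measure,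
    lintegral_map hg (by fun_prop), lintegral_map hg (by fun_prop), add_comm]
  simp

lemma half_ofReal : (2⁻¹ : ℝ≥0∞) = ENNReal.ofReal (2⁻¹ : ℝ) := by
  rw [ENNReal.ofReal_inv_of_pos (by norm_num)]; simp

lemma piEta_eq_withDensity (μ : ℝ → ℝ) (hmeas : Measurable μ) (hnn : ∀ x, 0 ≤ μ x) (η : ℝ)
    (hprob : IsProbabilityMeasure (volume.withDensity fun x => ENNReal.ofReal (μ x))) :
    piEta μ η = ((volume.withDensity fun x => ENNReal.ofReal (μ x)).prod nuHalf).withDensity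
      (fun z => ENNReal.ofReal (Real.exp (potEta η z))) := by
  have hpm := potEta_meas η
  refine Measure.ext_of_lintegral _ fun g hg => ?_
  rw [lintegral_withDensity_eq_lintegral_mul _ (by fun_prop) hg, lintegral_piEta μ hmeas η g hg,
    lintegral_rho _ _ (by fun_prop),
    lintegral_withDensity_eq_lintegral_mul _ (by fun_prop) (by fun_prop),
    lintegral_withDensity_eq_lintegral_mul _ (by fun_prop) (by fun_prop),
    ← lintegral_const_mul _ (by fun_prop), ← lintegral_const_mul _ (by fun_prop)]
  congr 1
  all_goals
    refine lintegral_congr fun x => ?_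
    simp only [Pi.mul_apply, exp_potEta]
    rw [half_ofReal, ← mul_assoc, ← mul_assoc, ← ENNReal.ofReal_mul (by norm_num),
      ← ENNReal.ofReal_mul (mul_nonneg (by norm_num) (hnn x))]
    congr 2
    try rw [sub_neg_eq_add]
    ring

lemma piEta_fst (μ : ℝ → ℝ) (hmeas : Measurable μ) (hnn : ∀ x, 0 ≤ μ x) (η : ℝ) :
    (piEta μ η).fst = (volume.withDensity fun x => ENNReal.ofReal (μ x)) := by
  have hz := zEta_meas η
  refine Measure.ext_of_lintegral _ fun g hg => ?_
  rw [Measure.fst, lintegral_map hg (by fun_prop), lintegral_piEta μ hmeas η _ (by fun_prop),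
    lintegral_withDensity_eq_lintegral_mul _ (by fun_prop) (by fun_prop),
    ← lintegral_add_left (by fun_prop)]
  refine lintegral_congr fun x => ?_
  have hzp := zEta_pos η x
  have := hnn x
  simp only [Pi.mul_apply]
  rw [← add_mul, ← ENNReal.ofReal_add (by positivity) (by positivity), ← add_div, ← mul_add]
  change ENNReal.ofReal (μ x * zEta η x / zEta η x) * _ = _
  rw [mul_div_cancel_right₀ _ hzp.ne']

lemma piEta_snd (μ : ℝ → ℝ) (hmeas : Measurable μ) (hnn : ∀ x, 0 ≤ μ x)
    (heven : ∀ x, μ x = μ (-x)) (η : ℝ)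
    (hprob : IsProbabilityMeasure (volume.withDensity fun x => ENNReal.ofReal (μ x))) :
    (piEta μ η).snd = nuHalf := by
  have hz := zEta_meas η
  set a : ℝ → ℝ≥0∞ := fun x => ENNReal.ofReal (μ x * Real.exp (-(η * (x - 1) ^ 2)) / zEta η x)
    with ha
  set b : ℝ → ℝ≥0∞ := fun x => ENNReal.ofReal (μ x * Real.exp (-(η * (x + 1) ^ 2)) / zEta η x)
    with hb
  have hab : ∫⁻ x, a x = ∫⁻ x, b x := by
    rw [← lintegral_neg_eq_self (fun x => b x)]
    refine lintegral_congr fun x => ?_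
    have h1 : zEta η (-x) = zEta η x := by
      unfold zEta
      rw [add_comm]; congr 3 <;> ring
    simp only [ha, hb, h1, ← heven x]
    congr 4; ring
  have huniv : (piEta μ η) Set.univ = 1 := by
    rw [← Measure.fst_univ, piEta_fst μ hmeas hnn η]; exact measure_univ
  have hsum : (∫⁻ x, a x) + ∫⁻ x, b x = 1 := by
    have := lintegral_piEta μ hmeas η (fun _ => 1) measurable_const
    rw [lintegral_one, huniv] at this
    simpa [mul_one] using this.symm
  have hb2 : ∫⁻ x, b x = 2⁻¹ := by
    rw [hab, ← two_mul] at hsum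
    exact ENNReal.eq_inv_of_mul_eq_one_left (by rw [mul_comm]; exact hsum)
  refine Measure.ext_of_lintegral _ fun g hg => ?_
  rw [Measure.snd, lintegral_map hg (by fun_prop), lintegral_piEta μ hmeas η _ (by fun_prop)]
  change (∫⁻ x, a x * g 1) + ∫⁻ x, b x * g (-1) = _
  rw [lintegral_mul_const _ (by fun_prop), lintegral_mul_const _ (by fun_prop), hab, hb2]
  simp [nuHalf, add_comm, lintegral_dirac' _ hg]

lemma log_zEta_integrable (M : Measure ℝ) [IsProbabilityMeasure M] (η : ℝ) (hη : 0 < η)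
    (h2 : Integrable (fun x => x ^ 2) M) : Integrable (fun x => Real.log (zEta η x)) M := by
  have hz := zEta_meas η
  refine Integrable.mono' (g := fun x => Real.log 2 + η * (2 * x ^ 2 + 2))
    ((integrable_const _).add (((h2.const_mul 2).add (integrable_const _)).const_mul η))
    (by exact hz.log.aestronglyMeasurable) (Filter.Eventually.of_forall fun x => ?_)
  have hp := zEta_pos η x
  have hl2 : 0 ≤ Real.log 2 := Real.log_nonneg (by norm_num)
  have hu : Real.log (zEta η x) ≤ Real.log 2 := by
    apply Real.log_le_log hp
    have h1 : Real.exp (-(η * (x - 1) ^ 2)) ≤ 1 := Real.exp_le_one_iff.2 (by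
      have : 0 ≤ η * (x - 1) ^ 2 := by positivity
      linarith)
    have h2 : Real.exp (-(η * (x + 1) ^ 2)) ≤ 1 := Real.exp_le_one_iff.2 (by
      have : 0 ≤ η * (x + 1) ^ 2 := by positivity
      linarith)
    unfold zEta; linarith
  have hl : -(η * (x - 1) ^ 2) ≤ Real.log (zEta η x) := by
    rw [Real.le_log_iff_exp_le hp]
    unfold zEta
    linarith [Real.exp_pos (-(η * (x + 1) ^ 2))]
  have h3 : η * (x - 1) ^ 2 ≤ η * (2 * x ^ 2 + 2) := by
    gcongr; nlinarith [sq_nonneg (x + 1)]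
  have h4 : 0 ≤ η * (2 * x ^ 2 + 2) := by positivity
  rw [Real.norm_eq_abs, abs_le]
  constructor <;> linarith

lemma cost_integrable (M : Measure ℝ) (h2 : Integrable (fun x => x ^ 2) M)
    (π : Measure (ℝ × ℝ)) [IsProbabilityMeasure π] (h : π.fst = M) (h' : π.snd = nuHalf) :
    Integrable (fun z : ℝ × ℝ => (z.1 - z.2) ^ 2) π := by
  have hx : Integrable (fun z : ℝ × ℝ => z.1 ^ 2) π := by
    rw [← h, Measure.fst] at h2
    exact (integrable_map_measure (by fun_prop) (by fun_prop)).1 h2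
  have hy : ∀ᵐ z ∂π, z.2 ^ 2 ≤ 1 := by
    have : ∀ᵐ y ∂(π.snd), y ^ 2 ≤ (1 : ℝ) := by
      have hms : MeasurableSet {y : ℝ | ¬ y ^ 2 ≤ 1} :=
        (measurableSet_le (measurable_id.pow_const 2) measurable_const).compl
      rw [h', ae_iff, nuHalf]
      simp [Measure.dirac_apply' _ hms]
    exact ae_of_ae_map (by fun_prop) this
  refine Integrable.mono' (g := fun z => 2 * z.1 ^ 2 + 2)
    ((hx.const_mul 2).add (integrable_const _)) (by fun_prop) ?_
  filter_upwards [hy] with z hz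
  rw [Real.norm_eq_abs, abs_of_nonneg (sq_nonneg _)]
  nlinarith [sq_nonneg (z.1 + z.2)]

lemma potEta_integral (M : Measure ℝ) [IsProbabilityMeasure M]
    (h2 : Integrable (fun x => x ^ 2) M) (η : ℝ) (hη : 0 < η)
    (π : Measure (ℝ × ℝ)) [IsProbabilityMeasure π] (h : π.fst = M) (h' : π.snd = nuHalf) :
    Integrable (potEta η) π ∧ ∫ z, potEta η z ∂π =
      Real.log 2 - η * (∫ z, (z.1 - z.2) ^ 2 ∂π) - ∫ x, Real.log (zEta η x) ∂M := by
  have hz := zEta_meas η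
  have hc := (cost_integrable M h2 π h h').const_mul η
  have hl := log_zEta_integrable M η hη h2
  have hl' : Integrable (fun z : ℝ × ℝ => Real.log (zEta η z.1)) π := by
    rw [← h, Measure.fst] at hl
    exact (integrable_map_measure hz.log.aestronglyMeasurable (by fun_prop)).1 hl
  have hle : ∫ z, Real.log (zEta η z.1) ∂π = ∫ x, Real.log (zEta η x) ∂M := by
    rw [← h, Measure.fst, integral_map (by fun_prop) hz.log.aestronglyMeasurable]
  have hc0 : Integrable (fun z : ℝ × ℝ => Real.log 2 - η * (z.1 - z.2) ^ 2) π :=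
    (integrable_const _).sub hc
  refine ⟨hc0.sub hl', ?_⟩
  unfold potEta
  rw [integral_sub hc0 hl', integral_sub (integrable_const _) hc, integral_const_mul, hle]
  simp

instance nuHalf_prob : IsProbabilityMeasure nuHalf := ⟨by
  simp [nuHalf, ENNReal.inv_two_add_inv_two]⟩

theorem piEta_isOptimal_entropic (μ : ℝ → ℝ)
    (hmeas : Measurable μ) (hnn : ∀ x, 0 ≤ μ x) (heven : ∀ x, μ x = μ (-x))
    (hprob : IsProbabilityMeasure (volume.withDensity fun x => ENNReal.ofReal (μ x)))
    (hmom2 : Integrable (fun x => x ^ 2 * μ x))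
    (η : ℝ) (hη : 0 < η) :
    (piEta μ η).fst = (volume.withDensity fun x => ENNReal.ofReal (μ x)) ∧
    (piEta μ η).snd = nuHalf ∧
    ∀ π : Measure (ℝ × ℝ), IsProbabilityMeasure π →
      π.fst = (volume.withDensity fun x => ENNReal.ofReal (μ x)) →
      π.snd = nuHalf →
      (∫⁻ z, ENNReal.ofReal ((z.1 - z.2) ^ 2) ∂(piEta μ η)) +
          ENNReal.ofReal (1 / η) *
            KLdiv (piEta μ η)
              ((volume.withDensity fun x => ENNReal.ofReal (μ x)).prod nuHalf) ≤
        (∫⁻ z, ENNReal.ofReal ((z.1 - z.2) ^ 2) ∂π) +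
          ENNReal.ofReal (1 / η) *
            KLdiv π ((volume.withDensity fun x => ENNReal.ofReal (μ x)).prod nuHalf) := by
  have hfst := piEta_fst μ hmeas hnn η
  have hsnd := piEta_snd μ hmeas hnn heven η hprob
  refine ⟨hfst, hsnd, fun π hπ h1 h2 => ?_⟩
  have hwd := piEta_eq_withDensity μ hmeas hnn η hprob
  have h2m : Integrable (fun x => x ^ 2)
      (volume.withDensity fun x => ENNReal.ofReal (μ x)) := by
    rw [integrable_withDensity_iff (by fun_prop) (by simp)]
    simpa [ENNReal.toReal_ofReal (hnn _)] using hmom2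
  set M := volume.withDensity fun x => ENNReal.ofReal (μ x) with hM
  set ρ := M.prod nuHalf with hρ
  haveI hpe : IsProbabilityMeasure (piEta μ η) := ⟨by
    rw [← Measure.fst_univ, hfst]; exact measure_univ⟩
  have hpm := potEta_meas η
  have hlint : ∫⁻ z, ENNReal.ofReal (Real.exp (potEta η z)) ∂ρ = 1 := by
    have := measure_univ (μ := piEta μ η)
    rwa [hwd, withDensity_apply _ MeasurableSet.univ, Measure.restrict_univ] at this
  have hexp : Integrable (fun z => Real.exp (potEta η z)) ρ := by
    refine ⟨by fun_prop, ?_⟩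
    rw [hasFiniteIntegral_iff_ofReal (Filter.Eventually.of_forall fun z => (Real.exp_pos _).le),
      hlint]
    simp
  have hint1 : ∫ z, Real.exp (potEta η z) ∂ρ = 1 := by
    rw [integral_eq_lintegral_of_nonneg_ae
      (Filter.Eventually.of_forall fun z => (Real.exp_pos _).le) (by fun_prop), hlint]
    simp
  have htilt : piEta μ η = ρ.tilted (potEta η) := by
    rw [Measure.tilted, hint1, hwd]; simp
  obtain ⟨hpi, hpe2⟩ := potEta_integral M h2m η hη π h1 h2
  obtain ⟨hpi', hpe2'⟩ := potEta_integral M h2m η hη (piEta μ η) hfst hsnd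
  have hc := cost_integrable M h2m π h1 h2
  have hc' := cost_integrable M h2m (piEta μ η) hfst hsnd
  have hac' : piEta μ η ≪ ρ := by rw [htilt]; exact tilted_absolutelyContinuous _ _
  have hllr' : llr (piEta μ η) ρ =ᵐ[piEta μ η] potEta η := by
    have := log_rnDeriv_tilted_left_self hexp
    rw [hint1, ← htilt] at this
    filter_upwards [hac'.ae_le this] with z hz
    simpa [llr] using hz
  have hlint' : Integrable (llr (piEta μ η) ρ) (piEta μ η) := hpi'.congr hllr'.symm
  have hnonneg' : 0 ≤ ∫ z, llr (piEta μ η) ρ z ∂(piEta μ η) := by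
    have := InformationTheory.integral_llr_add_sub_measure_univ_nonneg hac' hlint'
    simpa using this
  by_cases hk : π ≪ ρ ∧ Integrable (llr π ρ) π
  swap
  · rw [KLdiv, KLdiv, if_neg hk, ENNReal.mul_top (by simpa using hη)]
    simp
  obtain ⟨hac, hli⟩ := hk
  rw [KLdiv, KLdiv, if_pos ⟨hac', hlint'⟩, if_pos ⟨hac, hli⟩,
    ← ofReal_integral_eq_lintegral_ofReal hc (Filter.Eventually.of_forall fun z => sq_nonneg _),
    ← ofReal_integral_eq_lintegral_ofReal hc' (Filter.Eventually.of_forall fun z => sq_nonneg _),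
    ← ENNReal.ofReal_mul (by positivity), ← ENNReal.ofReal_mul (by positivity),
    ← ENNReal.ofReal_add (integral_nonneg fun z => sq_nonneg _)
      (mul_nonneg (by positivity) hnonneg')]
  have hge : 0 ≤ ∫ z, llr π ρ z ∂π := by
    have := InformationTheory.integral_llr_add_sub_measure_univ_nonneg hac hli
    simpa using this
  rw [← ENNReal.ofReal_add (integral_nonneg fun z => sq_nonneg _)
      (mul_nonneg (by positivity) hge)]
  apply ENNReal.ofReal_le_ofReal
  have hgibbs : 0 ≤ ∫ z, llr π (ρ.tilted (potEta η)) z ∂π := by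
    haveI : IsProbabilityMeasure (ρ.tilted (potEta η)) := htilt ▸ hpe
    have := InformationTheory.integral_llr_add_sub_measure_univ_nonneg
      (hac.trans (absolutelyContinuous_tilted hexp)) (integrable_llr_tilted_right hac hpi hli hexp)
    simpa using this
  rw [integral_llr_tilted_right hac hpi hexp hli, hint1, Real.log_one, add_zero, hpe2] at hgibbs
  rw [integral_congr_ae hllr', hpe2']
  have hk : ∀ C K : ℝ, C + 1 / η * K = (1 / η) * (η * C + K) := fun C K => by field_simp
  rw [hk, hk]
  gcongr (1 / η) * ?_
  linarith
end
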